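/- arXiv:2410.15421 — 7 statements merged into one kernel-verified Lean document; each statement's English description precedes it below -/
import Mathlib

section
/- For any warping functions γ₁, γ₂ ∈ Γ₁, the CLR transform of their composition satisfies, for all t ∈ [0,1], ψ_B(γ₁ ∘ γ₂)(t) = ψ_B(γ₁)(γ₂(t)) + ψ_B(γ₂)(t) − ∫₀¹ ψ_B(γ₁)(γ₂(s)) ds. -/
open Set MeasureTheory

/-- The centered log-ratio (CLR) transform `ψ_B`, expressed in terms of the
derivative function `g = γ′` of a warping function:
`ψ_B(γ)(t) = log γ′(t) − ∫₀¹ log γ′(s) ds`. -/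
noncomputable def clr (g : ℝ → ℝ) (t : ℝ) : ℝ :=
  Real.log (g t) - ∫ s in (0:ℝ)..1, Real.log (g s)

/-- The inverse CLR transform `ψ_B⁻¹(h)(t) = (∫₀ᵗ exp h) / (∫₀¹ exp h)`. -/
noncomputable def psiInv (h : ℝ → ℝ) (t : ℝ) : ℝ :=
  (∫ s in (0:ℝ)..t, Real.exp (h s)) / ∫ s in (0:ℝ)..1, Real.exp (h s)

/-- `γ` is a warping function in `Γ₁`, with (continuous) derivative `γ′` on `[0,1]`
bounded by `0 < m ≤ γ′ ≤ M`. -/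
def IsWarping (γ γ' : ℝ → ℝ) (m M : ℝ) : Prop :=
  γ 0 = 0 ∧ γ 1 = 1 ∧ Set.MapsTo γ (Set.Icc 0 1) (Set.Icc 0 1) ∧
  (∀ t ∈ Set.Icc (0:ℝ) 1, HasDerivWithinAt γ (γ' t) (Set.Icc 0 1) t) ∧
  ContinuousOn γ' (Set.Icc 0 1) ∧ 0 < m ∧
  ∀ t ∈ Set.Icc (0:ℝ) 1, m ≤ γ' t ∧ γ' t ≤ M


/-- for warping functions `γ₁, γ₂ ∈ Γ₁`, the CLR transform of their
composition (whose derivative is `t ↦ γ₁′(γ₂ t)·γ₂′(t)`) satisfies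
`ψ_B(γ₁ ∘ γ₂)(t) = ψ_B(γ₁)(γ₂ t) + ψ_B(γ₂)(t) − ∫₀¹ ψ_B(γ₁)(γ₂ s) ds`
for all `t ∈ [0,1]`. -/
theorem clr_comp
    (γ₁ γ₁' γ₂ γ₂' : ℝ → ℝ) (m₁ M₁ m₂ M₂ : ℝ)
    (h₁ : IsWarping γ₁ γ₁' m₁ M₁) (h₂ : IsWarping γ₂ γ₂' m₂ M₂) :
    ∀ t ∈ Set.Icc (0:ℝ) 1,
      clr (fun s => γ₁' (γ₂ s) * γ₂' s) t =
        clr γ₁' (γ₂ t) + clr γ₂' t - ∫ s in (0:ℝ)..1, clr γ₁' (γ₂ s) := by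
  intro t ht
  obtain ⟨-, -, -, -, hc1, hm1, hb1⟩ := h₁
  obtain ⟨-, -, hmaps, hd2, hc2, hm2, hb2⟩ := h₂
  have hp1 : ∀ s ∈ Set.Icc (0:ℝ) 1, γ₁' (γ₂ s) ≠ 0 := fun s hs =>
    (lt_of_lt_of_le hm1 (hb1 _ (hmaps hs)).1).ne'
  have hp2 : ∀ s ∈ Set.Icc (0:ℝ) 1, γ₂' s ≠ 0 := fun s hs =>
    (lt_of_lt_of_le hm2 (hb2 _ hs).1).ne'
  have hcg : ContinuousOn γ₂ (Set.Icc 0 1) := fun s hs => (hd2 s hs).continuousWithinAt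
  have hu : Set.uIcc (0:ℝ) 1 = Set.Icc 0 1 := Set.uIcc_of_le zero_le_one
  have hi1 : IntervalIntegrable (fun s => Real.log (γ₁' (γ₂ s))) volume 0 1 := by
    apply ContinuousOn.intervalIntegrable
    rw [hu]
    exact (hc1.comp hcg hmaps).log hp1
  have hi2 : IntervalIntegrable (fun s => Real.log (γ₂' s)) volume 0 1 := by
    apply ContinuousOn.intervalIntegrable
    rw [hu]
    exact hc2.log hp2
  have e : ∫ s in (0:ℝ)..1, Real.log (γ₁' (γ₂ s) * γ₂' s)
      = (∫ s in (0:ℝ)..1, Real.log (γ₁' (γ₂ s))) + ∫ s in (0:ℝ)..1, Real.log (γ₂' s) := by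
    rw [← intervalIntegral.integral_add hi1 hi2]
    apply intervalIntegral.integral_congr
    intro s hs
    rw [hu] at hs
    exact Real.log_mul (hp1 s hs) (hp2 s hs)
  unfold clr
  rw [intervalIntegral.integral_sub hi1 intervalIntegrable_const, e,
    Real.log_mul (hp1 t ht) (hp2 t ht), intervalIntegral.integral_const]
  simp only [sub_zero, one_smul]
  ring
end

section
/- For any warping function γ ∈ Γ₁ with inverse function γ⁻¹, the CLR transform of the inverse satisfies, for all t ∈ [0,1], ψ_B(γ⁻¹)(t) = −ψ_B(γ)(γ⁻¹(t)) + ∫₀¹ ψ_B(γ)(γ⁻¹(s)) ds. -/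
open Set MeasureTheory

/-- for a warping function `γ ∈ Γ₁` with inverse `δ = γ⁻¹ ∈ Γ₁`
(with derivative `δ′`), the CLR transform of the inverse satisfies
`ψ_B(γ⁻¹)(t) = −ψ_B(γ)(γ⁻¹ t) + ∫₀¹ ψ_B(γ)(γ⁻¹ s) ds` for all `t ∈ [0,1]`. -/
theorem clr_inverse
    (γ γ' δ δ' : ℝ → ℝ) (m M mδ Mδ : ℝ)
    (hγ : IsWarping γ γ' m M) (hδ : IsWarping δ δ' mδ Mδ)
    (hinv₁ : ∀ t ∈ Set.Icc (0:ℝ) 1, δ (γ t) = t)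
    (hinv₂ : ∀ t ∈ Set.Icc (0:ℝ) 1, γ (δ t) = t) :
    ∀ t ∈ Set.Icc (0:ℝ) 1,
      clr δ' t = -(clr γ' (δ t)) + ∫ s in (0:ℝ)..1, clr γ' (δ s) := by
  obtain ⟨_, _, gmap, gder, gcont, mpos, gbd⟩ := hγ
  obtain ⟨_, _, dmap, dder, dcont, _, _⟩ := hδ
  have hprod : ∀ t ∈ Set.Icc (0:ℝ) 1, γ' (δ t) * δ' t = 1 := by
    intro t ht
    have h1 : HasDerivWithinAt (γ ∘ δ) (γ' (δ t) * δ' t) (Set.Icc 0 1) t :=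
      (gder (δ t) (dmap ht)).comp t (dder t ht) dmap
    have h2 : HasDerivWithinAt (γ ∘ δ) 1 (Set.Icc 0 1) t :=
      (hasDerivWithinAt_id t _).congr (fun x hx => hinv₂ x hx) (hinv₂ t ht)
    exact (uniqueDiffOn_Icc (zero_lt_one' ℝ) t ht).eq_deriv _ h1 h2
  have hlog : ∀ t ∈ Set.Icc (0:ℝ) 1, Real.log (δ' t) = -Real.log (γ' (δ t)) := by
    intro t ht
    rw [eq_inv_of_mul_eq_one_right (hprod t ht), Real.log_inv]
  have hδc : ContinuousOn δ (Set.Icc 0 1) := fun t ht => (dder t ht).continuousWithinAt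
  have hc : ContinuousOn (fun s => Real.log (γ' (δ s))) (Set.Icc 0 1) :=
    (gcont.comp hδc dmap).log (fun s hs => (mpos.trans_le (gbd _ (dmap hs)).1).ne')
  have hint : IntervalIntegrable (fun s => Real.log (γ' (δ s))) volume 0 1 := by
    apply ContinuousOn.intervalIntegrable
    rwa [Set.uIcc_of_le zero_le_one]
  have hI : ∫ s in (0:ℝ)..1, Real.log (δ' s) = -∫ s in (0:ℝ)..1, Real.log (γ' (δ s)) := by
    rw [← intervalIntegral.integral_neg]
    apply intervalIntegral.integral_congr
    intro s hs
    rw [Set.uIcc_of_le zero_le_one] at hs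
    exact hlog s hs
  intro t ht
  simp only [clr]
  rw [intervalIntegral.integral_sub hint intervalIntegrable_const, hI, hlog t ht,
    intervalIntegral.integral_const]
  simp only [smul_eq_mul]
  ring
end

section
/- (Finite-sample form of Lemma 1.) Let γ₁, …, γₙ, γ*, γ₀ be warping functions in Γ₁ such that the average of the CLR transforms satisfies (1/n)·Σᵢ₌₁ⁿ ψ_B(γᵢ)(t) = ψ_B(γ*)(t) for all t ∈ [0,1]. Then (1/n)·Σᵢ₌₁ⁿ ψ_B(γᵢ ∘ γ₀)(t) = ψ_B(γ* ∘ γ₀)(t) for all t ∈ [0,1]. -/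
open Set MeasureTheory

theorem clr_comp_cont {γ γ' γ₀ γ₀' : ℝ → ℝ} {m M m₀ M₀ : ℝ}
    (h : IsWarping γ γ' m M) (h₀ : IsWarping γ₀ γ₀' m₀ M₀) :
    IntervalIntegrable (fun s => Real.log (γ' (γ₀ s))) volume 0 1 := by
  obtain ⟨-, -, -, -, hc, hm, hb⟩ := h
  obtain ⟨-, -, hmaps, hd, -, -, -⟩ := h₀
  apply ContinuousOn.intervalIntegrable
  rw [Set.uIcc_of_le zero_le_one]
  have hc0 : ContinuousOn γ₀ (Set.Icc 0 1) := fun t ht => (hd t ht).continuousWithinAt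
  refine (hc.comp hc0 hmaps).log ?_
  intro t ht
  exact (lt_of_lt_of_le hm (hb _ (hmaps ht)).1).ne'

theorem clr_comp_eq {γ γ' γ₀ γ₀' : ℝ → ℝ} {m M m₀ M₀ : ℝ}
    (h : IsWarping γ γ' m M) (h₀ : IsWarping γ₀ γ₀' m₀ M₀) (t : ℝ) (ht : t ∈ Set.Icc (0:ℝ) 1) :
    clr (fun s => γ' (γ₀ s) * γ₀' s) t =
      clr γ' (γ₀ t) - (∫ s in (0:ℝ)..1, clr γ' (γ₀ s)) + clr γ₀' t := by
  have hi := clr_comp_cont h h₀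
  obtain ⟨-, -, -, -, hc, hm, hb⟩ := h
  obtain ⟨-, -, hmaps, hd, hc', hm', hb'⟩ := h₀
  have hi0 : IntervalIntegrable (fun s => Real.log (γ₀' s)) volume 0 1 := by
    apply ContinuousOn.intervalIntegrable
    rw [Set.uIcc_of_le zero_le_one]
    exact hc'.log fun t ht => (lt_of_lt_of_le hm' (hb' _ ht).1).ne'
  have hlog : ∀ s ∈ Set.Icc (0:ℝ) 1, Real.log (γ' (γ₀ s) * γ₀' s) =
      Real.log (γ' (γ₀ s)) + Real.log (γ₀' s) := fun s hs =>
    Real.log_mul (lt_of_lt_of_le hm (hb _ (hmaps hs)).1).ne' (lt_of_lt_of_le hm' (hb' _ hs).1).ne'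
  have hint : (∫ s in (0:ℝ)..1, Real.log (γ' (γ₀ s) * γ₀' s)) =
      (∫ s in (0:ℝ)..1, Real.log (γ' (γ₀ s))) + ∫ s in (0:ℝ)..1, Real.log (γ₀' s) := by
    rw [← intervalIntegral.integral_add hi hi0]
    apply intervalIntegral.integral_congr
    intro s hs
    rw [Set.uIcc_of_le zero_le_one] at hs
    exact hlog s hs
  simp only [clr]
  rw [hint, hlog t ht, intervalIntegral.integral_sub hi (by simp)]
  simp
  ring

/-- finite-sample form of Lemma 1: let `γ₁, …, γₙ, γ*, γ₀ ∈ Γ₁` be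
warping functions such that `(1/n)·Σᵢ ψ_B(γᵢ)(t) = ψ_B(γ*)(t)` on `[0,1]`.  Then
`(1/n)·Σᵢ ψ_B(γᵢ ∘ γ₀)(t) = ψ_B(γ* ∘ γ₀)(t)` on `[0,1]`, where the derivative of
`γᵢ ∘ γ₀` is `t ↦ γᵢ′(γ₀ t)·γ₀′(t)` and similarly for `γ* ∘ γ₀`. -/
theorem clr_mean_comp
    (n : ℕ) (hn : 0 < n)
    (γ : Fin n → ℝ → ℝ) (γ' : Fin n → ℝ → ℝ) (m M : Fin n → ℝ)
    (γs γs' γ₀ γ₀' : ℝ → ℝ) (ms Ms m₀ M₀ : ℝ)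
    (hγ : ∀ i, IsWarping (γ i) (γ' i) (m i) (M i))
    (hγs : IsWarping γs γs' ms Ms)
    (hγ₀ : IsWarping γ₀ γ₀' m₀ M₀)
    (hmean : ∀ t ∈ Set.Icc (0:ℝ) 1,
      (1 / (n:ℝ)) * ∑ i : Fin n, clr (γ' i) t = clr γs' t) :
    ∀ t ∈ Set.Icc (0:ℝ) 1,
      (1 / (n:ℝ)) * ∑ i : Fin n, clr (fun s => γ' i (γ₀ s) * γ₀' s) t =
        clr (fun s => γs' (γ₀ s) * γ₀' s) t := by
  intro t ht
  have hmaps := hγ₀.2.2.1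
  rw [clr_comp_eq hγs hγ₀ t ht, Finset.sum_congr rfl fun i _ => clr_comp_eq (hγ i) hγ₀ t ht,
    Finset.sum_add_distrib, Finset.sum_sub_distrib, ← hmean _ (hmaps ht)]
  have hint : (∫ s in (0:ℝ)..1, clr γs' (γ₀ s)) =
      (1 / (n:ℝ)) * ∑ i : Fin n, ∫ s in (0:ℝ)..1, clr (γ' i) (γ₀ s) := by
    rw [← intervalIntegral.integral_finsetSum, ← intervalIntegral.integral_const_mul]
    · apply intervalIntegral.integral_congr
      intro s hs
      rw [Set.uIcc_of_le zero_le_one] at hs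
      exact (hmean _ (hmaps hs)).symm
    · intro i _
      exact (clr_comp_cont (hγ i) hγ₀).sub (by simp)
  have hn' : (n:ℝ) ≠ 0 := by positivity
  rw [hint]
  simp only [Finset.sum_const, Finset.card_univ, Fintype.card_fin, nsmul_eq_mul]
  field_simp
end

section
/- (Lemma 1, expectation form.) Let (Ω, ℱ, P) be a probability space, let γ₀, γ* ∈ Γ₁ be fixed warping functions, and let G : Ω → Γ₁ be a random warping function such that the map ω ↦ ψ_B(G(ω)), viewed as taking values in the Banach space C([0,1], ℝ) of continuous functions with the supremum norm, is Bochner integrable with Bochner integral ∫_Ω ψ_B(G(ω)) dP(ω) = ψ_B(γ*). Then the map ω ↦ ψ_B(G(ω) ∘ γ₀) is also Bochner integrable in C([0,1], ℝ), and ∫_Ω ψ_B(G(ω) ∘ γ₀) dP(ω) = ψ_B(γ* ∘ γ₀). -/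
open Set MeasureTheory

noncomputable def avgL : C(Set.Icc (0:ℝ) 1, ℝ) →L[ℝ] ℝ :=
  LinearMap.mkContinuous
    { toFun := fun f => ∫ s in (0:ℝ)..1, f (Set.projIcc 0 1 zero_le_one s)
      map_add' := by
        intro f g
        simp only [ContinuousMap.add_apply]
        have hc : ∀ f : C(Set.Icc (0:ℝ) 1, ℝ),
            Continuous (fun s => f (Set.projIcc (0:ℝ) 1 zero_le_one s)) :=
          fun f => f.continuous.comp continuous_projIcc
        exact intervalIntegral.integral_add ((hc f).intervalIntegrable _ _)
          ((hc g).intervalIntegrable _ _)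
      map_smul' := by
        intro r f
        simp [intervalIntegral.integral_const_mul] } 1 (by
    intro f
    have := intervalIntegral.norm_integral_le_of_norm_le_const (a := (0:ℝ)) (b := 1)
      (f := fun s => f (Set.projIcc 0 1 zero_le_one s)) (C := ‖f‖)
      (fun x _ => f.norm_coe_le_norm _)
    simpa using this)

theorem avgL_apply (f : C(Set.Icc (0:ℝ) 1, ℝ)) :
    avgL f = ∫ s in (0:ℝ)..1, f (Set.projIcc 0 1 zero_le_one s) := rfl

theorem key (g γ₀ γ₀' : ℝ → ℝ) (m M m₀ M₀ : ℝ) (γ : ℝ → ℝ)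
    (hg : IsWarping γ g m M) (h₀ : IsWarping γ₀ γ₀' m₀ M₀)
    (c : C(Set.Icc (0:ℝ) 1, Set.Icc (0:ℝ) 1)) (hc : ∀ t, (c t : ℝ) = γ₀ t)
    (b φ ψ : C(Set.Icc (0:ℝ) 1, ℝ))
    (hb : ∀ t : Set.Icc (0:ℝ) 1, b t = clr γ₀' t)
    (hφ : ∀ t : Set.Icc (0:ℝ) 1, φ t = clr g t)
    (hψ : ∀ t : Set.Icc (0:ℝ) 1, ψ t = clr (fun s => g (γ₀ s) * γ₀' s) t) :
    ψ = φ.comp c - ContinuousMap.const _ (avgL (φ.comp c)) + b := by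
  obtain ⟨-, -, -, -, -, hm, hgb⟩ := hg
  obtain ⟨-, -, -, -, hcont, hm₀, hb₀⟩ := h₀
  set K := ∫ s in (0:ℝ)..1, Real.log (g s) with hK
  have e : ∀ s (hs : s ∈ Set.Icc (0:ℝ) 1),
      Real.log (g (γ₀ s) * γ₀' s) = φ (c ⟨s, hs⟩) + K + Real.log (γ₀' s) := by
    intro s hs
    have h1 := (hgb _ (c ⟨s, hs⟩).2).1
    have h2 := (hb₀ s hs).1
    rw [hφ, clr, hc] at *
    simp only at *
    rw [Real.log_mul (by linarith) (by linarith)]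
    ring
  have hlog : ContinuousOn (fun s => Real.log (γ₀' s)) (Set.uIcc (0:ℝ) 1) := by
    rw [Set.uIcc_of_le zero_le_one]
    exact hcont.log (fun s hs => by linarith [(hb₀ s hs).1])
  have I : ∫ s in (0:ℝ)..1, Real.log (g (γ₀ s) * γ₀' s) =
      avgL (φ.comp c) + K + ∫ s in (0:ℝ)..1, Real.log (γ₀' s) := by
    have hcc : Continuous (fun s => (φ.comp c) (Set.projIcc (0:ℝ) 1 zero_le_one s)) :=
      (φ.comp c).continuous.comp continuous_projIcc
    have hcK : Continuous (fun s => (φ.comp c) (Set.projIcc (0:ℝ) 1 zero_le_one s) + K) :=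
      hcc.add continuous_const
    have : ∫ s in (0:ℝ)..1, Real.log (g (γ₀ s) * γ₀' s) = ∫ s in (0:ℝ)..1,
        (((φ.comp c) (Set.projIcc (0:ℝ) 1 zero_le_one s) + K) + Real.log (γ₀' s)) := by
      apply intervalIntegral.integral_congr
      intro s hs
      rw [Set.uIcc_of_le zero_le_one] at hs
      simp only [e s hs, Set.projIcc_of_mem zero_le_one hs, ContinuousMap.comp_apply]
    rw [this, intervalIntegral.integral_add
      (hcK.intervalIntegrable _ _) hlog.intervalIntegrable,
      intervalIntegral.integral_add (hcc.intervalIntegrable _ _)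
      (continuous_const.intervalIntegrable _ _), avgL_apply]
    simp
  ext t
  have et := e t t.2
  simp only [ContinuousMap.add_apply, ContinuousMap.sub_apply, ContinuousMap.comp_apply,
    ContinuousMap.const_apply, hψ, hb]
  rw [clr, clr, I, et]
  ring

/-- Lemma 1, expectation form: let `P` be a probability measure on
`Ω`, let `γ₀, γ* ∈ Γ₁`, and let `G : Ω → Γ₁` be a random warping function.  Let
`Φ ω ∈ C([0,1], ℝ)` be the CLR transform `ψ_B(G ω)`, and `Ψ ω` that of
`G ω ∘ γ₀`; let `ψ* = ψ_B(γ*)` and `ψc = ψ_B(γ* ∘ γ₀)` as elements of the Banach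
space `C([0,1], ℝ)`.  If `Φ` is Bochner integrable with `∫ Φ dP = ψ*`, then `Ψ`
is Bochner integrable and `∫ Ψ dP = ψc`, i.e. `E[ψ_B(G ∘ γ₀)] = ψ_B(γ* ∘ γ₀)`. -/
theorem lemma1_expectation
    {Ω : Type*} [MeasurableSpace Ω]
    (P : MeasureTheory.Measure Ω) [MeasureTheory.IsProbabilityMeasure P]
    (G G' : Ω → ℝ → ℝ) (mG MG : Ω → ℝ)
    (γ₀ γ₀' γs γs' : ℝ → ℝ) (m₀ M₀ ms Ms : ℝ)
    (hG : ∀ ω, IsWarping (G ω) (G' ω) (mG ω) (MG ω))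
    (hγ₀ : IsWarping γ₀ γ₀' m₀ M₀)
    (hγs : IsWarping γs γs' ms Ms)
    (Φ Ψ : Ω → C(Set.Icc (0:ℝ) 1, ℝ))
    (ψstar ψcomp : C(Set.Icc (0:ℝ) 1, ℝ))
    (hΦ : ∀ ω, ∀ t : Set.Icc (0:ℝ) 1, Φ ω t = clr (G' ω) t)
    (hΨ : ∀ ω, ∀ t : Set.Icc (0:ℝ) 1,
      Ψ ω t = clr (fun s => G' ω (γ₀ s) * γ₀' s) t)
    (hstar : ∀ t : Set.Icc (0:ℝ) 1, ψstar t = clr γs' t)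
    (hcomp : ∀ t : Set.Icc (0:ℝ) 1,
      ψcomp t = clr (fun s => γs' (γ₀ s) * γ₀' s) t)
    (hint : MeasureTheory.Integrable Φ P)
    (hmean : (∫ ω, Φ ω ∂P) = ψstar) :
    MeasureTheory.Integrable Ψ P ∧ (∫ ω, Ψ ω ∂P) = ψcomp := by
  obtain ⟨-, -, hmap, hder, hcont, hm₀, hb₀⟩ := id hγ₀
  have hγc : ContinuousOn γ₀ (Set.Icc 0 1) := fun t ht => (hder t ht).continuousWithinAt
  let c : C(Set.Icc (0:ℝ) 1, Set.Icc (0:ℝ) 1) := ⟨_, hγc.mapsToRestrict hmap⟩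
  have hc : ∀ t, (c t : ℝ) = γ₀ t := fun t => rfl
  have hlog : ContinuousOn (clr γ₀') (Set.Icc (0:ℝ) 1) :=
    (hcont.log (fun s hs => by linarith [(hb₀ s hs).1])).sub continuousOn_const
  let b : C(Set.Icc (0:ℝ) 1, ℝ) := ⟨_, hlog.domRestrict⟩
  have hb : ∀ t : Set.Icc (0:ℝ) 1, b t = clr γ₀' t := fun t => rfl
  let C : C(Set.Icc (0:ℝ) 1, ℝ) →L[ℝ] C(Set.Icc (0:ℝ) 1, ℝ) :=
    (ContinuousMap.compRightAlgHom ℝ ℝ c).toLinearMap.mkContinuous 1 (by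
      intro f
      rw [one_mul]
      exact (ContinuousMap.norm_le _ (norm_nonneg _)).2 (fun x => f.norm_coe_le_norm _))
  let L : C(Set.Icc (0:ℝ) 1, ℝ) →L[ℝ] C(Set.Icc (0:ℝ) 1, ℝ) :=
    C - (avgL.comp C).smulRight (ContinuousMap.const _ 1)
  have hL : ∀ f, L f = f.comp c - ContinuousMap.const _ (avgL (f.comp c)) := by
    intro f
    have : C f = f.comp c := rfl
    ext t
    simp [L, this]
  have hΨ' : Ψ = fun ω => L (Φ ω) + b := by
    funext ω
    rw [hL]
    exact key _ _ _ _ _ _ _ _ (hG ω) hγ₀ c hc b _ _ hb (hΦ ω) (hΨ ω)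
  have hs' : ψcomp = L ψstar + b := by
    rw [hL]
    exact key _ _ _ _ _ _ _ _ hγs hγ₀ c hc b _ _ hb hstar hcomp
  have hi := L.integrable_comp hint
  rw [hΨ', hs']
  refine ⟨hi.add (integrable_const b), ?_⟩
  rw [integral_add hi (integrable_const b), L.integral_comp_comm hint, hmean]
  simp
end

section
/- (Centering of the orbit.) Let γ₁, …, γₙ ∈ Γ₁ be warping functions and define the CLR mean warping γ̄ = ψ_B⁻¹((1/n)·Σᵢ₌₁ⁿ ψ_B(γᵢ)). Then the centered warpings γᵢ ∘ γ̄⁻¹ satisfy (1/n)·Σᵢ₌₁ⁿ ψ_B(γᵢ ∘ γ̄⁻¹)(t) = 0 for all t ∈ [0,1]; that is, the CLR mean of {γᵢ ∘ γ̄⁻¹} is the identity warping γ_id(t) = t. -/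
open Set MeasureTheory

/-- centering of the orbit: let `γ₁, …, γₙ ∈ Γ₁` and let
`γ̄ = ψ_B⁻¹((1/n)·Σᵢ ψ_B(γᵢ))` be the CLR mean warping, with inverse `δ = γ̄⁻¹ ∈ Γ₁`
(with derivative `δ′`).  Then the centered warpings `γᵢ ∘ γ̄⁻¹` (with derivatives
`t ↦ γᵢ′(δ t)·δ′(t)`) satisfy `(1/n)·Σᵢ ψ_B(γᵢ ∘ γ̄⁻¹)(t) = 0` for all `t ∈ [0,1]`;
that is, their CLR mean `ψ_B⁻¹((1/n)·Σᵢ ψ_B(γᵢ ∘ γ̄⁻¹))` is the identity warping. -/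
theorem centering_of_orbit
    (n : ℕ) (hn : 0 < n)
    (γ : Fin n → ℝ → ℝ) (γ' : Fin n → ℝ → ℝ) (m M : Fin n → ℝ)
    (hγ : ∀ i, IsWarping (γ i) (γ' i) (m i) (M i))
    (δ δ' : ℝ → ℝ) (mδ Mδ : ℝ)
    (hδ : IsWarping δ δ' mδ Mδ)
    (hinv₁ : ∀ t ∈ Set.Icc (0:ℝ) 1,
      δ (psiInv (fun s => (1 / (n:ℝ)) * ∑ i : Fin n, clr (γ' i) s) t) = t)
    (hinv₂ : ∀ t ∈ Set.Icc (0:ℝ) 1,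
      psiInv (fun s => (1 / (n:ℝ)) * ∑ i : Fin n, clr (γ' i) s) (δ t) = t) :
    (∀ t ∈ Set.Icc (0:ℝ) 1,
      (1 / (n:ℝ)) * ∑ i : Fin n, clr (fun s => γ' i (δ s) * δ' s) t = 0) ∧
    ∀ t ∈ Set.Icc (0:ℝ) 1,
      psiInv (fun u => (1 / (n:ℝ)) * ∑ i : Fin n,
        clr (fun s => γ' i (δ s) * δ' s) u) t = t := by
  obtain ⟨-, -, hmaps, hder, hδc, hmpos, hbd⟩ := hδ
  have hn' : (n:ℝ) ≠ 0 := by positivity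
  have hI : uIcc (0:ℝ) 1 = Icc 0 1 := uIcc_of_le zero_le_one
  have hδcont : ContinuousOn δ (Icc 0 1) := fun t ht => (hder t ht).continuousWithinAt
  have hδpos : ∀ t ∈ Icc (0:ℝ) 1, 0 < δ' t := fun t ht => hmpos.trans_le (hbd t ht).1
  have hγc : ∀ i, ContinuousOn (γ' i) (Icc 0 1) := fun i => (hγ i).2.2.2.2.1
  have hγpos : ∀ i, ∀ t ∈ Icc (0:ℝ) 1, 0 < γ' i t := fun i t ht =>
    (hγ i).2.2.2.2.2.1.trans_le ((hγ i).2.2.2.2.2.2 t ht).1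
  set h : ℝ → ℝ := fun s => (1 / (n:ℝ)) * ∑ i : Fin n, clr (γ' i) s with hh
  have hhc : ContinuousOn h (Icc 0 1) := by
    refine continuousOn_const.mul (continuousOn_finset_sum _ fun i _ => ?_)
    exact ((hγc i).log fun t ht => (hγpos i t ht).ne').sub continuousOn_const
  set E : ℝ → ℝ := fun x => Real.exp (h (projIcc (0:ℝ) 1 zero_le_one x)) with hE
  have hEc : Continuous E := by
    have := (continuousOn_iff_continuous_restrict.1 hhc).comp
      (continuous_projIcc (a := (0:ℝ)) (b := 1) (h := zero_le_one))
    exact Real.continuous_exp.comp this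
  have hEeq : ∀ x ∈ Icc (0:ℝ) 1, E x = Real.exp (h x) := by
    intro x hx
    simp only [hE, projIcc_of_mem zero_le_one hx]
  have hint : ∀ t ∈ Icc (0:ℝ) 1, ∫ s in (0:ℝ)..t, Real.exp (h s) = ∫ s in (0:ℝ)..t, E s := by
    intro t ht
    refine intervalIntegral.integral_congr fun x hx => ?_
    rw [uIcc_of_le ht.1] at hx
    exact (hEeq x ⟨hx.1, hx.2.trans ht.2⟩).symm
  set C : ℝ := ∫ s in (0:ℝ)..1, E s with hC
  have hCpos : 0 < C := intervalIntegral.intervalIntegral_pos_of_pos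
    (hEc.intervalIntegrable _ _) (fun x => Real.exp_pos _) zero_lt_one
  have key : ∀ t ∈ Icc (0:ℝ) 1, ∫ s in (0:ℝ)..(δ t), E s = C * t := by
    intro t ht
    have := hinv₂ t ht
    rw [psiInv, hint _ (hmaps ht), hint 1 (by simp), div_eq_iff hCpos.ne'] at this
    rw [this, mul_comm]
  have key2 : ∀ t ∈ Icc (0:ℝ) 1, E (δ t) * δ' t = C := by
    intro t ht
    have h1 : HasDerivAt (fun u => ∫ s in (0:ℝ)..u, E s) (E (δ t)) (δ t) :=
      (hEc.integral_hasStrictDerivAt 0 (δ t)).hasDerivAt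
    have h2 := h1.comp_hasDerivWithinAt t (hder t ht)
    have h3 : HasDerivWithinAt (fun t : ℝ => C * t) C (Icc 0 1) t := by
      simpa using ((hasDerivAt_id t).const_mul C).hasDerivWithinAt
    have h4 := h3.congr (f₁ := (fun u => ∫ s in (0:ℝ)..u, E s) ∘ δ) key (key t ht)
    exact ((uniqueDiffOn_Icc zero_lt_one).uniqueDiffWithinAt ht).eq_deriv _ h2 h4
  have key3 : ∀ t ∈ Icc (0:ℝ) 1, h (δ t) + Real.log (δ' t) = Real.log C := by
    intro t ht
    rw [← key2 t ht, hEeq _ (hmaps ht), Real.log_mul (Real.exp_ne_zero _) (hδpos t ht).ne',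
      Real.log_exp]
  have key4 : ∀ t ∈ Icc (0:ℝ) 1, ∑ i : Fin n, Real.log (γ' i (δ t) * δ' t) =
      n * Real.log C + ∑ i : Fin n, ∫ s in (0:ℝ)..1, Real.log (γ' i s) := by
    intro t ht
    have h1 : ∀ i ∈ Finset.univ, Real.log (γ' i (δ t) * δ' t) =
        Real.log (γ' i (δ t)) + Real.log (δ' t) := fun i _ =>
      Real.log_mul (hγpos i _ (hmaps ht)).ne' (hδpos t ht).ne'
    rw [Finset.sum_congr rfl h1, ← key3 t ht]
    simp only [hh, clr, Finset.sum_add_distrib, Finset.sum_sub_distrib, Finset.sum_const,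
      Finset.card_univ, Fintype.card_fin, nsmul_eq_mul]
    field_simp
    ring
  have main : ∀ t ∈ Icc (0:ℝ) 1,
      (1 / (n:ℝ)) * ∑ i : Fin n, clr (fun s => γ' i (δ s) * δ' s) t = 0 := by
    intro t ht
    have hii : ∀ i ∈ (Finset.univ : Finset (Fin n)), IntervalIntegrable
        (fun s => Real.log (γ' i (δ s) * δ' s)) volume 0 1 := by
      intro i _
      apply ContinuousOn.intervalIntegrable
      rw [hI]
      exact (((hγc i).comp hδcont hmaps).mul hδc).log fun s hs =>
        (mul_pos (hγpos i _ (hmaps hs)) (hδpos s hs)).ne'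
    simp only [clr, Finset.sum_sub_distrib]
    rw [← intervalIntegral.integral_finset_sum hii, key4 t ht,
      intervalIntegral.integral_congr (g := fun _ => n * Real.log C +
        ∑ i : Fin n, ∫ s in (0:ℝ)..1, Real.log (γ' i s)) (fun s hs => key4 s (hI ▸ hs))]
    simp
  refine ⟨main, fun t ht => ?_⟩
  have hone : ∀ t ∈ Icc (0:ℝ) 1, ∫ u in (0:ℝ)..t, Real.exp ((1 / (n:ℝ)) * ∑ i : Fin n,
        clr (fun s => γ' i (δ s) * δ' s) u) = t := by
    intro t ht
    rw [intervalIntegral.integral_congr (g := fun _ => (1:ℝ))]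
    · simp
    · intro x hx
      rw [uIcc_of_le ht.1] at hx
      simp only [main x ⟨hx.1, hx.2.trans ht.2⟩, Real.exp_zero]
  rw [psiInv, hone t ht, hone 1 (by simp), div_one]
end

section
/- (Centering at an arbitrary warping.) Let γ₁, …, γₙ ∈ Γ₁ be warping functions, let γ* ∈ Γ₁ be any fixed warping, and define the CLR mean warping γ̄ = ψ_B⁻¹((1/n)·Σᵢ₌₁ⁿ ψ_B(γᵢ)). Then (1/n)·Σᵢ₌₁ⁿ ψ_B(γᵢ ∘ γ̄⁻¹ ∘ γ*)(t) = ψ_B(γ*)(t) for all t ∈ [0,1]; that is, the CLR mean of the recentered warpings {γᵢ ∘ γ̄⁻¹ ∘ γ*} equals γ*. -/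
open Set MeasureTheory

theorem psiInv_hasDeriv (h : ℝ → ℝ) (hc : ContinuousOn h (Icc 0 1)) (x : ℝ) (hx : x ∈ Icc (0:ℝ) 1) :
    HasDerivWithinAt (psiInv h) (Real.exp (h x) / ∫ s in (0:ℝ)..1, Real.exp (h s)) (Icc 0 1) x := by
  have hE : ContinuousOn (fun s => Real.exp (h s)) (Icc 0 1) := hc.rexp
  set E : ℝ → ℝ := IccExtend (zero_le_one (α := ℝ)) ((Icc (0:ℝ) 1).restrict fun s => Real.exp (h s)) with hEdef
  have hEc : Continuous E := (continuousOn_iff_continuous_restrict.1 hE).Icc_extend'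
  have hEq : ∀ s ∈ Icc (0:ℝ) 1, E s = Real.exp (h s) := fun s hs => by
    rw [hEdef, IccExtend_of_mem _ _ hs]; rfl
  have hF : ∀ u ∈ Icc (0:ℝ) 1, ∫ s in (0:ℝ)..u, Real.exp (h s) = ∫ s in (0:ℝ)..u, E s := by
    intro u hu
    apply intervalIntegral.integral_congr
    intro s hs
    rw [uIcc_of_le hu.1] at hs
    exact (hEq s ⟨hs.1, hs.2.trans hu.2⟩).symm
  have hd : HasDerivAt (fun u => ∫ s in (0:ℝ)..u, E s) (E x) x := hEc.integral_hasStrictDerivAt 0 x |>.hasDerivAt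
  have := (hd.div_const (∫ s in (0:ℝ)..1, Real.exp (h s))).hasDerivWithinAt (s := Icc 0 1)
  rw [hEq x hx] at this
  refine this.congr (fun u hu => ?_) ?_
  · simp only [psiInv]; rw [hF u hu]
  · simp only [psiInv]; rw [hF x hx]

/-- centering at an arbitrary warping: let `γ₁, …, γₙ ∈ Γ₁`, let
`γ* ∈ Γ₁` be fixed, and let `γ̄ = ψ_B⁻¹((1/n)·Σᵢ ψ_B(γᵢ))` be the CLR mean
warping, with inverse `δ = γ̄⁻¹ ∈ Γ₁` (with derivative `δ′`).  Then the recentered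
warpings `γᵢ ∘ γ̄⁻¹ ∘ γ*` (with derivatives `t ↦ γᵢ′(δ(γ* t))·δ′(γ* t)·γ*′(t)`)
satisfy `(1/n)·Σᵢ ψ_B(γᵢ ∘ γ̄⁻¹ ∘ γ*)(t) = ψ_B(γ*)(t)` for all `t ∈ [0,1]`;
that is, their CLR mean equals `γ*`. -/
theorem centering_at_arbitrary_warping
    (n : ℕ) (hn : 0 < n)
    (γ : Fin n → ℝ → ℝ) (γ' : Fin n → ℝ → ℝ) (m M : Fin n → ℝ)
    (hγ : ∀ i, IsWarping (γ i) (γ' i) (m i) (M i))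
    (γs γs' : ℝ → ℝ) (ms Ms : ℝ) (hγs : IsWarping γs γs' ms Ms)
    (δ δ' : ℝ → ℝ) (mδ Mδ : ℝ)
    (hδ : IsWarping δ δ' mδ Mδ)
    (hinv₁ : ∀ t ∈ Set.Icc (0:ℝ) 1,
      δ (psiInv (fun s => (1 / (n:ℝ)) * ∑ i : Fin n, clr (γ' i) s) t) = t)
    (hinv₂ : ∀ t ∈ Set.Icc (0:ℝ) 1,
      psiInv (fun s => (1 / (n:ℝ)) * ∑ i : Fin n, clr (γ' i) s) (δ t) = t) :
    ∀ t ∈ Set.Icc (0:ℝ) 1,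
      (1 / (n:ℝ)) * ∑ i : Fin n,
        clr (fun s => γ' i (δ (γs s)) * δ' (γs s) * γs' s) t = clr γs' t := by
  have hn' : (n:ℝ) ≠ 0 := by positivity
  set H : ℝ → ℝ := fun s => (1 / (n:ℝ)) * ∑ i : Fin n, clr (γ' i) s with hH
  obtain ⟨_, _, hδm, hδd, hδc, hδ0, hδb⟩ := hδ
  obtain ⟨_, _, hsm, hsd, hsc, hs0, hsb⟩ := hγs
  have hgpos : ∀ i, ∀ t ∈ Icc (0:ℝ) 1, 0 < γ' i t := fun i t ht =>
    (hγ i).2.2.2.2.2.1.trans_le ((hγ i).2.2.2.2.2.2 t ht).1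
  have hδpos : ∀ t ∈ Icc (0:ℝ) 1, 0 < δ' t := fun t ht => hδ0.trans_le (hδb t ht).1
  have hspos : ∀ t ∈ Icc (0:ℝ) 1, 0 < γs' t := fun t ht => hs0.trans_le (hsb t ht).1
  have hgc : ∀ i, ContinuousOn (γ' i) (Icc 0 1) := fun i => (hγ i).2.2.2.2.1
  have hδcont : ContinuousOn δ (Icc 0 1) := fun t ht => (hδd t ht).continuousWithinAt
  have hscont : ContinuousOn γs (Icc 0 1) := fun t ht => (hsd t ht).continuousWithinAt
  have hHc : ContinuousOn H (Icc 0 1) := by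
    refine continuousOn_const.mul (continuousOn_finset_sum _ fun i _ => ?_)
    exact ((hgc i).log fun t ht => (hgpos i t ht).ne').sub continuousOn_const
  set C := ∫ s in (0:ℝ)..1, Real.exp (H s) with hC
  have key : ∀ t ∈ Icc (0:ℝ) 1, Real.exp (H (δ t)) / C * δ' t = 1 := by
    intro t ht
    have h1 := (psiInv_hasDeriv H hHc (δ t) (hδm ht)).comp t (hδd t ht) hδm
    have h2 : HasDerivWithinAt (psiInv H ∘ δ) 1 (Icc 0 1) t :=
      (hasDerivWithinAt_id t _).congr (fun u hu => hinv₂ u hu) (hinv₂ t ht)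
    exact (uniqueDiffOn_Icc zero_lt_one t ht).eq_deriv _ h1 h2
  have key2 : ∀ t ∈ Icc (0:ℝ) 1, H (δ t) + Real.log (δ' t) = Real.log C := by
    intro t ht
    have h := key t ht
    have hC0 : C ≠ 0 := by
      intro h0
      simp [h0] at h
    have h' : C = Real.exp (H (δ t)) * δ' t := by
      field_simp at h
      exact h.symm
    rw [h', Real.log_mul (Real.exp_ne_zero _) (hδpos t ht).ne', Real.log_exp]
  set P : Fin n → ℝ → ℝ := fun i s => γ' i (δ (γs s)) * δ' (γs s) * γs' s with hP
  set K : ℝ := Real.log C + (1 / (n:ℝ)) * ∑ i : Fin n, ∫ s in (0:ℝ)..1, Real.log (γ' i s) with hK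
  have hlog : ∀ s ∈ Icc (0:ℝ) 1,
      (1 / (n:ℝ)) * ∑ i : Fin n, Real.log (P i s) = K + Real.log (γs' s) := by
    intro s hs
    have e : ∀ i, Real.log (P i s)
        = Real.log (γ' i (δ (γs s))) + (Real.log (δ' (γs s)) + Real.log (γs' s)) := by
      intro i
      have a := hgpos i _ (hδm (hsm hs))
      have b := hδpos _ (hsm hs)
      have c := hspos _ hs
      simp only [hP]
      rw [Real.log_mul (mul_pos a b).ne' c.ne', Real.log_mul a.ne' b.ne']
      ring
    have k := key2 _ (hsm hs)
    simp only [hH, clr, Finset.sum_sub_distrib, mul_sub] at k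
    simp only [e, Finset.sum_add_distrib, Finset.sum_const, Finset.card_univ, Fintype.card_fin,
      nsmul_eq_mul, mul_add, hK]
    rw [one_div, inv_mul_cancel_left₀ hn', inv_mul_cancel_left₀ hn']
    rw [one_div] at k
    linarith
  have hPint : ∀ i, IntervalIntegrable (fun s => Real.log (P i s)) volume 0 1 := by
    intro i
    apply ContinuousOn.intervalIntegrable
    rw [uIcc_of_le zero_le_one]
    refine ContinuousOn.log ?_ ?_
    · exact ((((hgc i).comp hδcont hδm).comp hscont hsm).mul (hδc.comp hscont hsm)).mul hsc
    · intro s hs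
      exact (mul_pos (mul_pos (hgpos i _ (hδm (hsm hs))) (hδpos _ (hsm hs))) (hspos _ hs)).ne'
  have hsint : IntervalIntegrable (fun s => Real.log (γs' s)) volume 0 1 := by
    apply ContinuousOn.intervalIntegrable
    rw [uIcc_of_le zero_le_one]
    exact hsc.log fun s hs => (hspos s hs).ne'
  have hI : (1 / (n:ℝ)) * ∑ i : Fin n, ∫ s in (0:ℝ)..1, Real.log (P i s)
      = K + ∫ s in (0:ℝ)..1, Real.log (γs' s) := by
    rw [← intervalIntegral.integral_finset_sum (fun i _ => hPint i),
      ← intervalIntegral.integral_const_mul]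
    rw [intervalIntegral.integral_congr (g := fun s => K + Real.log (γs' s))]
    · rw [intervalIntegral.integral_add (by simp) hsint]
      simp
    · intro s hs
      rw [uIcc_of_le zero_le_one] at hs
      exact hlog s hs
  intro t ht
  have := hlog t ht
  simp only [clr, Finset.sum_sub_distrib, mul_sub]
  linarith
end

section
/- (Failure of composition isometry for the CLR transform.) There exist warping functions γ₁, γ₂, γ ∈ Γ₁ such that the L²([0,1]) distance between the CLR transforms is not preserved by right composition with γ: ‖ψ_B(γ₁ ∘ γ) − ψ_B(γ₂ ∘ γ)‖ ≠ ‖ψ_B(γ₁) − ψ_B(γ₂)‖, where ‖·‖ denotes the L²([0,1]) norm. -/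
open Set MeasureTheory

/-- failure of composition isometry for the CLR transform: there
exist warping functions `γ₁, γ₂, γ ∈ Γ₁` such that
`‖ψ_B(γ₁ ∘ γ) − ψ_B(γ₂ ∘ γ)‖ ≠ ‖ψ_B(γ₁) − ψ_B(γ₂)‖` in `L²([0,1])`, where the
derivative of `γᵢ ∘ γ` is `t ↦ γᵢ′(γ t)·γ′(t)`. -/
theorem clr_not_composition_isometry :
    ∃ (γ₁ γ₁' γ₂ γ₂' γ γ' : ℝ → ℝ) (m₁ M₁ m₂ M₂ m M : ℝ),
      IsWarping γ₁ γ₁' m₁ M₁ ∧ IsWarping γ₂ γ₂' m₂ M₂ ∧ IsWarping γ γ' m M ∧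
      Real.sqrt (∫ t in (0:ℝ)..1,
          (clr (fun s => γ₁' (γ s) * γ' s) t -
            clr (fun s => γ₂' (γ s) * γ' s) t) ^ 2) ≠
        Real.sqrt (∫ t in (0:ℝ)..1, (clr γ₁' t - clr γ₂' t) ^ 2) := by
  have he : 0 < Real.exp 1 - 1 := by
    have := Real.add_one_lt_exp (x := 1) one_ne_zero
    linarith
  have hpos : ∀ s ∈ Set.Icc (0:ℝ) 1, (0:ℝ) < (1 + 2 * s) / 2 := by
    intro s hs
    have := hs.1
    linarith
  refine ⟨fun t => (Real.exp t - 1) / (Real.exp 1 - 1), fun t => Real.exp t / (Real.exp 1 - 1),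
    fun t => t, fun _ => 1, fun t => (t + t ^ 2) / 2, fun t => (1 + 2 * t) / 2,
    1 / (Real.exp 1 - 1), Real.exp 1 / (Real.exp 1 - 1), 1, 1, 1 / 2, 3 / 2, ?_, ?_, ?_, ?_⟩
  · refine ⟨by simp, div_self he.ne', ?_, ?_, ?_, by positivity, ?_⟩
    · intro t ht
      have h0 := Real.one_le_exp ht.1
      have h1 := Real.exp_le_exp.2 ht.2
      exact ⟨div_nonneg (by linarith) he.le, (div_le_one he).2 (by linarith)⟩
    · intro t _
      exact (((Real.hasDerivAt_exp t).sub_const 1).div_const _).hasDerivWithinAt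
    · fun_prop
    · intro t ht
      have h0 := Real.one_le_exp ht.1
      have h1 := Real.exp_le_exp.2 ht.2
      exact ⟨div_le_div_of_nonneg_right h0 he.le, div_le_div_of_nonneg_right h1 he.le⟩
  · exact ⟨rfl, rfl, fun t ht => ht, fun t _ => hasDerivWithinAt_id t _, continuousOn_const,
      one_pos, fun t _ => ⟨le_rfl, le_rfl⟩⟩
  · refine ⟨by norm_num, by norm_num, ?_, ?_, by fun_prop, by norm_num, ?_⟩
    · intro t ht
      obtain ⟨h0, h1⟩ := ht
      constructor
      · positivity
      · show (t + t ^ 2) / 2 ≤ 1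
        nlinarith
    · intro t _
      have := (((hasDerivAt_id t).add ((hasDerivAt_id t).pow 2)).div_const 2).hasDerivWithinAt
        (s := Set.Icc (0:ℝ) 1)
      exact this.congr_deriv (by simp)
    · intro t ht
      obtain ⟨h0, h1⟩ := ht
      constructor <;> linarith
  · set c := Real.log (Real.exp 1 - 1) with hc
    have hu : Set.uIcc (0:ℝ) 1 = Set.Icc 0 1 := Set.uIcc_of_le zero_le_one
    have hL : IntervalIntegrable (fun s : ℝ => Real.log ((1 + 2 * s) / 2)) volume 0 1 := by
      apply ContinuousOn.intervalIntegrable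
      rw [hu]
      exact ContinuousOn.log (by fun_prop) (fun s hs => (hpos s hs).ne')
    have e1 : ∀ t, Real.log (Real.exp t / (Real.exp 1 - 1)) = t - c := by
      intro t
      rw [Real.log_div (Real.exp_pos t).ne' he.ne', Real.log_exp]
    have e2 : ∀ t ∈ Set.Icc (0:ℝ) 1,
        Real.log (Real.exp ((t + t ^ 2) / 2) / (Real.exp 1 - 1) * ((1 + 2 * t) / 2))
          = ((t + t ^ 2) / 2 - c) + Real.log ((1 + 2 * t) / 2) := by
      intro t ht
      rw [Real.log_mul (div_pos (Real.exp_pos _) he).ne' (hpos t ht).ne', e1]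
    have I0 : ∫ s in (0:ℝ)..1, (s - c) = 1 / 2 - c := by
      rw [intervalIntegral.integral_sub (by simp) (by simp)]
      simp
    have Iq : ∫ s in (0:ℝ)..1, ((s + s ^ 2) / 2 - c) = 5 / 12 - c := by
      rw [intervalIntegral.integral_sub (Continuous.intervalIntegrable (by fun_prop) _ _) (by simp),
        intervalIntegral.integral_div, intervalIntegral.integral_add (by simp) (by simp)]
      simp [integral_pow]
      norm_num
    have I1 : ∫ s in (0:ℝ)..1,
        Real.log (Real.exp ((s + s ^ 2) / 2) / (Real.exp 1 - 1) * ((1 + 2 * s) / 2))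
          = (5 / 12 - c) + ∫ s in (0:ℝ)..1, Real.log ((1 + 2 * s) / 2) := by
      rw [intervalIntegral.integral_congr (fun t ht => e2 t (hu ▸ ht)),
        intervalIntegral.integral_add (Continuous.intervalIntegrable (by fun_prop) _ _) hL, Iq]
    have J1 : (∫ t in (0:ℝ)..1,
        (clr (fun s => Real.exp ((s + s ^ 2) / 2) / (Real.exp 1 - 1) * ((1 + 2 * s) / 2)) t -
            clr (fun s => 1 * ((1 + 2 * s) / 2)) t) ^ 2) = 61 / 720 := by
      have : ∀ t ∈ Set.uIcc (0:ℝ) 1,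
        (clr (fun s => Real.exp ((s + s ^ 2) / 2) / (Real.exp 1 - 1) * ((1 + 2 * s) / 2)) t -
            clr (fun s => 1 * ((1 + 2 * s) / 2)) t) ^ 2 =
          (1 / 4) * t ^ 4 + (1 / 2) * t ^ 3 + (-1 / 6) * t ^ 2 + (-5 / 12) * t ^ 1 + 25 / 144 := by
        intro t ht
        simp only [clr, one_mul]
        rw [I1, e2 t (hu ▸ ht)]
        ring
      rw [intervalIntegral.integral_congr this]
      repeat rw [intervalIntegral.integral_add (Continuous.intervalIntegrable (by fun_prop) _ _)
        (Continuous.intervalIntegrable (by fun_prop) _ _)]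
      simp only [intervalIntegral.integral_const_mul, integral_pow, intervalIntegral.integral_const]
      norm_num
    have J2 : (∫ t in (0:ℝ)..1,
        (clr (fun t => Real.exp t / (Real.exp 1 - 1)) t - clr (fun _ => 1) t) ^ 2) = 1 / 12 := by
      have : ∀ t ∈ Set.uIcc (0:ℝ) 1,
        (clr (fun t => Real.exp t / (Real.exp 1 - 1)) t - clr (fun _ => 1) t) ^ 2 =
          1 * t ^ 2 + (-1) * t ^ 1 + 1 / 4 := by
        intro t ht
        simp only [clr, e1, I0, Real.log_one, intervalIntegral.integral_zero]
        ring
      rw [intervalIntegral.integral_congr this]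
      repeat rw [intervalIntegral.integral_add (Continuous.intervalIntegrable (by fun_prop) _ _)
        (Continuous.intervalIntegrable (by fun_prop) _ _)]
      simp only [intervalIntegral.integral_const_mul, integral_pow, intervalIntegral.integral_const]
      norm_num
    intro h
    have h2 := (Real.sqrt_inj (J1 ▸ by norm_num) (J2 ▸ by norm_num)).1 h
    have h3 : (61 / 720 : ℝ) = 1 / 12 := J1.symm.trans (h2.trans J2)
    norm_num at h3
end
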